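/- Let μ > 0 and let κ : ℝ^{d_θ} → ℝ be differentiable with ⟨θ−θ', ∇κ(θ)−∇κ(θ')⟩ ≥ μ‖θ−θ'‖² for all θ, θ' ∈ ℝ^{d_θ}, and let θ̄⋆ ∈ ℝ^{d_θ} satisfy ∇κ(θ̄⋆) = 0 (so θ̄⋆ is the unique global minimiser of κ). Then for every N ≥ 1 the function θ ↦ e^{−Nκ(θ)} is Lebesgue-integrable with 0 < Z_N := ∫_{ℝ^{d_θ}} e^{−Nκ(θ)} dθ < ∞, and the probability measure π_Θ on ℝ^{d_θ} with density θ ↦ e^{−Nκ(θ)}/Z_N satisfies ∫ ‖θ − θ̄⋆‖² π_Θ(dθ) ≤ 2 d_θ/(μ N). In particular (∫ ‖θ − θ̄⋆‖² π_Θ(dθ))^{1/2} ≤ √(2 d_θ/(μ N)), which is the Wasserstein-2 distance W₂(π_Θ, δ_{θ̄⋆}) between π_Θ and the Dirac measure at θ̄⋆. -/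

import Mathlib

open MeasureTheory Real
open scoped RealInnerProductSpace ENNReal

/-- The Gibbs probability measure on `ℝ^d` with density proportional to `exp (-f θ)`. -/
noncomputable def gibbsMeasure {d : ℕ} (f : EuclideanSpace ℝ (Fin d) → ℝ) :
    Measure (EuclideanSpace ℝ (Fin d)) :=
  (ENNReal.ofReal (∫ θ, Real.exp (-f θ)))⁻¹ •
    volume.withDensity fun θ => ENNReal.ofReal (Real.exp (-f θ))

/-!
Let `f = N κ`, `m = μ N` and `c = θ̄⋆`. The bound `m * ‖x - c‖ ^ 2 ≤ ⟪x - c, ∇f x⟫` integrates along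
the ray from `c` through `x` to
`f (c + t (x - c)) + m / 2 * (1 - t ^ 2) * ‖x - c‖ ^ 2 ≤ f x` for `0 ≤ t ≤ 1`. Exponentiating, using
`1 + u ≤ exp u` and integrating over `x`, the homothety of ratio `t` contributes only its Jacobian:
`Z + m / 2 * (1 - t ^ 2) * Q ≤ t ^ (-d) * Z`, where `Z = ∫ exp (-f)` and
`Q = ∫ ‖x - c‖ ^ 2 * exp (-f)`. Both sides agree at `t = 1`, and comparing their derivatives there
gives `m * Q ≤ d * Z`, without any integration by parts.
-/

open scoped Topology

section RayGrowth

variable {E : Type*} [NormedAddCommGroup E] [NormedSpace ℝ E]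

/-- `f` grows along every ray issuing from `c` at least as fast as `m / 2 * ‖x - c‖ ^ 2` does,
that is, `f - m / 2 * ‖· - c‖ ^ 2` is nondecreasing along these rays. This is what the Gibbs
measure needs of `m`-strong convexity with minimiser `c`; the ray through `x` is parametrised by
the homotheties of centre `c`. -/
def HasQuadraticRayGrowth (m : ℝ) (f : E → ℝ) (c : E) : Prop :=
  ∀ x, ∀ t ∈ Set.Icc (0 : ℝ) 1,
    f (AffineMap.homothety c t x) + m / 2 * (1 - t ^ 2) * ‖x - c‖ ^ 2 ≤ f x

theorem hasQuadraticRayGrowth_of_le_fderiv {m : ℝ} {f : E → ℝ} {c : E}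
    (hf : Differentiable ℝ f) (hgrowth : ∀ x, m * ‖x - c‖ ^ 2 ≤ fderiv ℝ f x (x - c)) :
    HasQuadraticRayGrowth m f c := by
  intro x t ht
  let φ : ℝ → ℝ := fun s => f (c + s • (x - c)) - m / 2 * ‖x - c‖ ^ 2 * s ^ 2
  let φ' : ℝ → ℝ := fun s => fderiv ℝ f (c + s • (x - c)) (x - c) - m * ‖x - c‖ ^ 2 * s
  have hφ (s : ℝ) : HasDerivAt φ (φ' s) s := by
    have hray : HasDerivAt (fun s : ℝ => c + s • (x - c)) (x - c) s := by
      simpa only [id, one_smul] using ((hasDerivAt_id s).smul_const (x - c)).const_add c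
    refine (((hf _).hasFDerivAt.comp_hasDerivAt s hray).sub
      ((hasDerivAt_pow 2 s).const_mul (m / 2 * ‖x - c‖ ^ 2))).congr_deriv ?_
    simp only [φ']
    ring
  have hφ'_nonneg (s : ℝ) (hs : 0 < s) : 0 ≤ φ' s := by
    have h := hgrowth (c + s • (x - c))
    rw [add_sub_cancel_left, norm_smul, mul_pow, Real.norm_eq_abs, sq_abs, map_smul,
      smul_eq_mul] at h
    refine nonneg_of_mul_nonneg_right (a := s) ?_ hs
    simp only [φ']
    linarith
  have hmono : MonotoneOn φ (Set.Ici 0) :=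
    monotoneOn_of_hasDerivWithinAt_nonneg (convex_Ici 0)
      (fun s _ => (hφ s).continuousAt.continuousWithinAt)
      (fun s _ => (hφ s).hasDerivWithinAt)
      (fun s hs => hφ'_nonneg s (by simpa only [interior_Ici, Set.mem_Ioi] using hs))
  have hle : φ t ≤ φ 1 := hmono ht.1 (Set.mem_Ici.2 zero_le_one) ht.2
  simp only [φ, one_smul, add_sub_cancel] at hle
  rw [AffineMap.homothety_apply, vsub_eq_sub, vadd_eq_add, add_comm (t • (x - c))]
  linarith

namespace HasQuadraticRayGrowth

variable {m : ℝ} {f : E → ℝ} {c : E}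

theorem const_mul (h : HasQuadraticRayGrowth m f c) {β : ℝ} (hβ : 0 ≤ β) :
    HasQuadraticRayGrowth (m * β) (fun x => β * f x) c := fun x t ht =>
  calc β * f (AffineMap.homothety c t x) + m * β / 2 * (1 - t ^ 2) * ‖x - c‖ ^ 2
      = β * (f (AffineMap.homothety c t x) + m / 2 * (1 - t ^ 2) * ‖x - c‖ ^ 2) := by ring
    _ ≤ β * f x := mul_le_mul_of_nonneg_left (h x t ht) hβ

theorem center_add_le (h : HasQuadraticRayGrowth m f c) (x : E) :
    f c + m / 2 * ‖x - c‖ ^ 2 ≤ f x := by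
  simpa using h x 0 (by simp)

theorem one_add_mul_exp_neg_le (h : HasQuadraticRayGrowth m f c) {t : ℝ}
    (ht : t ∈ Set.Icc (0 : ℝ) 1) (x : E) :
    (1 + m / 2 * (1 - t ^ 2) * ‖x - c‖ ^ 2) * exp (-f x) ≤
      exp (-f (AffineMap.homothety c t x)) :=
  calc (1 + m / 2 * (1 - t ^ 2) * ‖x - c‖ ^ 2) * exp (-f x)
      ≤ exp (m / 2 * (1 - t ^ 2) * ‖x - c‖ ^ 2) * exp (-f x) := by
        gcongr
        rw [add_comm]
        exact add_one_le_exp _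
    _ = exp (m / 2 * (1 - t ^ 2) * ‖x - c‖ ^ 2 + -f x) := (exp_add _ _).symm
    _ ≤ exp (-f (AffineMap.homothety c t x)) := exp_le_exp.2 (by linarith [h x t ht])

end HasQuadraticRayGrowth

end RayGrowth

theorem nonneg_of_hasDerivWithinAt_Iio {ψ : ℝ → ℝ} {ψ' a : ℝ}
    (hψ : HasDerivWithinAt ψ ψ' (Set.Iio a) a) (hle : ∀ᶠ t in 𝓝[<] a, ψ t ≤ ψ a) : 0 ≤ ψ' := by
  refine ge_of_tendsto ((hasDerivWithinAt_iff_tendsto_slope' Set.self_notMem_Iio).1 hψ) ?_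
  filter_upwards [hle, self_mem_nhdsWithin] with t ht hta
  rw [slope_def_field]
  exact div_nonneg_of_nonpos (sub_nonpos.2 ht) (sub_nonpos.2 (Set.mem_Iio.1 hta).le)

section HaarMeasure

variable {E : Type*} [NormedAddCommGroup E] [NormedSpace ℝ E] [FiniteDimensional ℝ E]
  [MeasurableSpace E] [BorelSpace E] (ν : Measure E) [ν.IsAddHaarMeasure]

theorem integrable_exp_neg_mul_sq_norm {b : ℝ} (hb : 0 < b) :
    Integrable (fun x : E => exp (-b * ‖x‖ ^ 2)) ν := by
  rcases subsingleton_or_nontrivial E with _ | _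
  · exact Integrable.of_finite
  refine (integrable_fun_norm_addHaar ν (f := fun r => exp (-b * r ^ 2))).2 ?_
  have hradial := integrableOn_rpow_mul_exp_neg_mul_sq hb
    (s := ((Module.finrank ℝ E - 1 : ℕ) : ℝ)) (neg_one_lt_zero.trans_le (Nat.cast_nonneg _))
  simpa only [rpow_natCast, smul_eq_mul] using hradial

section Homothety

variable {F : Type*} [NormedAddCommGroup F]

theorem integrable_comp_homothety {g : E → F} (hg : Integrable g ν) (c : E) {t : ℝ} (ht : t ≠ 0) :
    Integrable (fun x => g (AffineMap.homothety c t x)) ν := by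
  simpa only [AffineMap.homothety_apply, vsub_eq_sub, vadd_eq_add] using
    ((hg.comp_add_right c).comp_smul ht).comp_sub_right c

theorem integral_comp_homothety [NormedSpace ℝ F] (g : E → F) (c : E) (t : ℝ) :
    ∫ x, g (AffineMap.homothety c t x) ∂ν = |(t ^ Module.finrank ℝ E)⁻¹| • ∫ x, g x ∂ν :=
  calc ∫ x, g (AffineMap.homothety c t x) ∂ν
      = ∫ x, g (t • x + c) ∂ν := integral_sub_right_eq_self (fun x => g (t • x + c)) c
    _ = |(t ^ Module.finrank ℝ E)⁻¹| • ∫ x, g (x + c) ∂ν :=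
        ν.integral_comp_smul (fun x => g (x + c)) t
    _ = |(t ^ Module.finrank ℝ E)⁻¹| • ∫ x, g x ∂ν := by rw [integral_add_right_eq_self]

end Homothety

namespace HasQuadraticRayGrowth

variable {ν} {m : ℝ} {f : E → ℝ} {c : E}

theorem integrable_exp_neg (h : HasQuadraticRayGrowth m f c) (hm : 0 < m)
    (hf : AEStronglyMeasurable f ν) : Integrable (fun x => exp (-f x)) ν := by
  have hgauss : Integrable (fun x => exp (-(m / 2) * ‖x - c‖ ^ 2)) ν :=
    (integrable_exp_neg_mul_sq_norm ν (half_pos hm)).comp_sub_right c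
  refine (hgauss.const_mul (exp (-f c))).mono'
    (continuous_exp.comp_aestronglyMeasurable hf.neg) (.of_forall fun x => ?_)
  rw [Real.norm_eq_abs, abs_exp, ← exp_add]
  exact exp_le_exp.2 (by linarith [h.center_add_le x])

theorem integrable_sq_norm_mul_exp_neg (h : HasQuadraticRayGrowth m f c) (hm : 0 < m)
    (hint : Integrable (fun x => exp (-f x)) ν) :
    Integrable (fun x => ‖x - c‖ ^ 2 * exp (-f x)) ν := by
  have hhalf : Integrable (fun x => exp (-f (AffineMap.homothety c (1 / 2 : ℝ) x))) ν :=
    integrable_comp_homothety ν hint c one_half_pos.ne'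
  have hnorm : AEStronglyMeasurable (fun x => ‖x - c‖ ^ 2) ν := by fun_prop
  refine (hhalf.const_mul (m / 2 * (1 - (1 / 2) ^ 2))⁻¹).mono' (hnorm.mul hint.1)
    (.of_forall fun x => ?_)
  rw [Real.norm_of_nonneg (by positivity), le_inv_mul_iff₀ (mul_pos (half_pos hm) (by norm_num))]
  have hle := h.one_add_mul_exp_neg_le (t := 1 / 2) (by norm_num) x
  linarith [exp_pos (-f x)]

theorem pow_mul_integral_exp_neg_add_le (h : HasQuadraticRayGrowth m f c)
    (hint : Integrable (fun x => exp (-f x)) ν)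
    (hsq : Integrable (fun x => ‖x - c‖ ^ 2 * exp (-f x)) ν) {t : ℝ} (ht : t ∈ Set.Ioc (0 : ℝ) 1) :
    t ^ Module.finrank ℝ E * (∫ x, exp (-f x) ∂ν +
      m / 2 * (1 - t ^ 2) * ∫ x, ‖x - c‖ ^ 2 * exp (-f x) ∂ν) ≤ ∫ x, exp (-f x) ∂ν := by
  have hpow : 0 < t ^ Module.finrank ℝ E := pow_pos ht.1 _
  rw [← le_inv_mul_iff₀ hpow]
  calc ∫ x, exp (-f x) ∂ν + m / 2 * (1 - t ^ 2) * ∫ x, ‖x - c‖ ^ 2 * exp (-f x) ∂ν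
      = ∫ x, (exp (-f x) + m / 2 * (1 - t ^ 2) * (‖x - c‖ ^ 2 * exp (-f x))) ∂ν := by
        rw [integral_add hint (hsq.const_mul _), integral_const_mul]
    _ ≤ ∫ x, exp (-f (AffineMap.homothety c t x)) ∂ν :=
        integral_mono (hint.add (hsq.const_mul _))
          (integrable_comp_homothety ν hint c ht.1.ne') fun x =>
            le_of_eq_of_le (by ring) (h.one_add_mul_exp_neg_le (Set.Ioc_subset_Icc_self ht) x)
    _ = (t ^ Module.finrank ℝ E)⁻¹ * ∫ x, exp (-f x) ∂ν := by
        rw [integral_comp_homothety ν (fun x => exp (-f x)), abs_of_pos (inv_pos.2 hpow),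
          smul_eq_mul]

theorem mul_integral_sq_norm_mul_exp_neg_le (h : HasQuadraticRayGrowth m f c)
    (hint : Integrable (fun x => exp (-f x)) ν)
    (hsq : Integrable (fun x => ‖x - c‖ ^ 2 * exp (-f x)) ν) :
    m * ∫ x, ‖x - c‖ ^ 2 * exp (-f x) ∂ν ≤ Module.finrank ℝ E * ∫ x, exp (-f x) ∂ν := by
  set Z := ∫ x, exp (-f x) ∂ν
  set Q := ∫ x, ‖x - c‖ ^ 2 * exp (-f x) ∂ν
  let ψ : ℝ → ℝ := fun t => t ^ Module.finrank ℝ E * (Z + m / 2 * (1 - t ^ 2) * Q)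
  have hψ : HasDerivAt ψ (Module.finrank ℝ E * Z - m * Q) 1 := by
    refine ((hasDerivAt_pow (Module.finrank ℝ E) (1 : ℝ)).mul
      (((((hasDerivAt_pow 2 (1 : ℝ)).const_sub 1).const_mul (m / 2)).mul_const Q).const_add
        Z)).congr_deriv ?_
    norm_num
    ring
  have hψ_le : ∀ᶠ t in 𝓝[<] (1 : ℝ), ψ t ≤ ψ 1 := by
    filter_upwards [Ioo_mem_nhdsLT zero_lt_one] with t ht
    calc ψ t ≤ Z := h.pow_mul_integral_exp_neg_add_le hint hsq (Set.Ioo_subset_Ioc_self ht)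
      _ = ψ 1 := by simp [ψ]
  exact sub_nonneg.1 (nonneg_of_hasDerivWithinAt_Iio hψ.hasDerivWithinAt hψ_le)

theorem integrable_sq_norm_tilted (h : HasQuadraticRayGrowth m f c) (hm : 0 < m)
    (hint : Integrable (fun x => exp (-f x)) ν) :
    Integrable (fun x => ‖x - c‖ ^ 2) (ν.tilted fun x => -f x) := by
  rw [integrable_tilted_iff hint]
  simpa only [smul_eq_mul, mul_comm] using h.integrable_sq_norm_mul_exp_neg hm hint

theorem integral_sq_norm_tilted_le (h : HasQuadraticRayGrowth m f c) (hm : 0 < m)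
    (hint : Integrable (fun x => exp (-f x)) ν) :
    ∫ x, ‖x - c‖ ^ 2 ∂(ν.tilted fun x => -f x) ≤ Module.finrank ℝ E / m := by
  have hsq := h.integrable_sq_norm_mul_exp_neg hm hint
  have hratio : ∫ x, ‖x - c‖ ^ 2 ∂(ν.tilted fun x => -f x) =
      (∫ x, ‖x - c‖ ^ 2 * exp (-f x) ∂ν) / ∫ x, exp (-f x) ∂ν := by
    rw [integral_tilted, ← integral_div]
    exact integral_congr_ae (.of_forall fun x => by simp only [smul_eq_mul]; ring)
  rw [hratio, div_le_div_iff₀ (integral_exp_pos hint) hm, mul_comm _ m]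
  exact h.mul_integral_sq_norm_mul_exp_neg_le hint hsq

end HasQuadraticRayGrowth

theorem gibbs_concentration_general {μ β : ℝ} (hμ : 0 < μ) (hβ : 0 < β) {κ : E → ℝ}
    (hdiff : Differentiable ℝ κ) {c : E}
    (hgrowth : ∀ x, μ * ‖x - c‖ ^ 2 ≤ fderiv ℝ κ x (x - c)) :
    Integrable (fun x => exp (-(β * κ x))) ν ∧
    Integrable (fun x => ‖x - c‖ ^ 2) (ν.tilted fun x => -(β * κ x)) ∧
    ∫ x, ‖x - c‖ ^ 2 ∂(ν.tilted fun x => -(β * κ x)) ≤ Module.finrank ℝ E / (μ * β) := by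
  have hray : HasQuadraticRayGrowth (μ * β) (fun x => β * κ x) c :=
    (hasQuadraticRayGrowth_of_le_fderiv hdiff hgrowth).const_mul hβ.le
  have hint : Integrable (fun x => exp (-(β * κ x))) ν :=
    hray.integrable_exp_neg (mul_pos hμ hβ)
      (hdiff.continuous.const_mul β).aestronglyMeasurable
  exact ⟨hint, hray.integrable_sq_norm_tilted (mul_pos hμ hβ) hint,
    hray.integral_sq_norm_tilted_le (mul_pos hμ hβ) hint⟩

end HaarMeasure

theorem gibbsMeasure_eq_tilted {d : ℕ} {f : EuclideanSpace ℝ (Fin d) → ℝ}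
    (hf : Integrable fun θ => exp (-f θ)) :
    gibbsMeasure f = volume.tilted fun θ => -f θ := by
  have hZ : 0 < ∫ θ, exp (-f θ) := integral_exp_pos hf
  rw [gibbsMeasure, Measure.tilted,
    ← withDensity_smul' _ _ (ENNReal.inv_ne_top.2 (ENNReal.ofReal_pos.2 hZ).ne')]
  congr with θ
  rw [Pi.smul_apply, smul_eq_mul, ENNReal.ofReal_div_of_pos hZ, div_eq_mul_inv, mul_comm]

/-- **Concentration of the Gibbs measure `∝ e^{-Nκ}` around the minimiser** (the concentration
half of Proposition 4.2).  If `κ` is differentiable with `μ`-strongly monotone gradient and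
`∇κ(θ̄⋆) = 0`, then for every `N ≥ 1` the density `e^{-Nκ}` is integrable with positive mass,
and the normalised measure `π_Θ ∝ e^{-Nκ}` has second moment about `θ̄⋆` at most `2 dθ/(μ N)`;
in particular its square root, which is `W₂(π_Θ, δ_{θ̄⋆})`, is at most `√(2 dθ/(μ N))`. -/
theorem gibbs_concentration {dθ : ℕ} (μ : ℝ) (hμ : 0 < μ)
    (κ : EuclideanSpace ℝ (Fin dθ) → ℝ)
    (hdiff : Differentiable ℝ κ)
    (hmono : ∀ θ θ' : EuclideanSpace ℝ (Fin dθ),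
      μ * ‖θ - θ'‖ ^ 2 ≤ ⟪θ - θ', gradient κ θ - gradient κ θ'⟫)
    (θs : EuclideanSpace ℝ (Fin dθ)) (hθs : gradient κ θs = 0)
    (N : ℕ) (hN : 1 ≤ N) :
    Integrable (fun θ => Real.exp (-(N * κ θ))) ∧
    (0 < ∫ θ, Real.exp (-(N * κ θ))) ∧
    (∫ θ, ‖θ - θs‖ ^ 2 ∂(gibbsMeasure fun θ => N * κ θ)) ≤ 2 * dθ / (μ * N) ∧
    Real.sqrt (∫ θ, ‖θ - θs‖ ^ 2 ∂(gibbsMeasure fun θ => N * κ θ)) ≤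
      Real.sqrt (2 * dθ / (μ * N)) := by
  have hN_pos : (0 : ℝ) < N := by exact_mod_cast hN
  have hgrowth (θ : EuclideanSpace ℝ (Fin dθ)) : μ * ‖θ - θs‖ ^ 2 ≤ fderiv ℝ κ θ (θ - θs) := by
    simpa [hθs, inner_gradient_right] using hmono θ θs
  obtain ⟨hint, -, hsharp⟩ := gibbs_concentration_general volume hμ hN_pos hdiff hgrowth
  have hle : ∫ θ, ‖θ - θs‖ ^ 2 ∂(gibbsMeasure fun θ => N * κ θ) ≤ 2 * dθ / (μ * N) := by
    rw [gibbsMeasure_eq_tilted hint]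
    refine hsharp.trans ?_
    rw [finrank_euclideanSpace_fin]
    gcongr
    linarith [(Nat.cast_nonneg dθ : (0 : ℝ) ≤ dθ)]
  exact ⟨hint, integral_exp_pos hint, hle, Real.sqrt_le_sqrt hle⟩
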